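/- Let R be a ring and let Z be a set of isomorphism classes of simple left R-modules; say a simple R-module is of type Z if its isomorphism class lies in Z, and of type Z' otherwise. Assume that Ext^1_R(S, S') = 0 and Ext^1_R(S', S) = 0 whenever S is a simple module of type Z and S' is a simple module of type Z'. Then every left R-module M of finite length admits submodules M^Z and M^{Z'} with M = M^Z ⊕ M^{Z'}, such that every composition factor of M^Z is of type Z, every composition factor of M^{Z'} is of type Z', and moreover M^Z (respectively M^{Z'}) contains every submodule of M all of whose composition factors are of type Z (respectively of type Z'). -/

import Mathlib

open CategoryTheory

universe u

/-- `AllCompositionFactorsIn R Z M` says that `M` admits a composition series all of whose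
(simple) factors satisfy the (isomorphism-invariant) predicate `Z`, i.e. every composition
factor of `M` is "of type `Z`". -/
def AllCompositionFactorsIn (R : Type u) [Ring R]
    (Z : ∀ (S : Type u) [AddCommGroup S] [Module R S], Prop)
    (M : Type u) [AddCommGroup M] [Module R M] : Prop :=
  ∃ (n : ℕ) (f : Fin (n + 1) → Submodule R M),
    Monotone f ∧ f 0 = ⊥ ∧ f (Fin.last n) = ⊤ ∧
    ∀ i : Fin n,
      IsSimpleModule R
        ((f i.succ) ⧸ (Submodule.comap (f i.succ).subtype (f i.castSucc))) ∧
      Z ((f i.succ) ⧸ (Submodule.comap (f i.succ).subtype (f i.castSucc)))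

/-- The first Ext group of two `R`-modules, computed in the abelian category of
`R`-modules (as a `ℤ`-linear category). -/
noncomputable def ext1Group (R : Type u) [Ring R] (S : Type u) [AddCommGroup S] [Module R S]
    (T : Type u) [AddCommGroup T] [Module R T] : Type u :=
  ((Ext ℤ (ModuleCat.{u} R) 1).obj (Opposite.op (ModuleCat.of R S))).obj (ModuleCat.of R T)

/-!
Work in the lattice of submodules, where a composition factor is a cover `A ⋖ B`, and "being of
type `Z`" is a property of covers that is unchanged along the second isomorphism theorem. By
modularity the submodules with all factors of type `Z` are closed under `⊔`, so there is a greatest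
one `N`, and likewise a greatest one `N'` for the other type; they meet trivially. If `N ⊔ N'` were
not everything, it would be covered by some `E`, say with factor of type `Z`. The vanishing of
`Ext¹` lets one exchange this factor with the factors of `(N ⊔ N') / N`, all of the other type, one
after the other, until it sits directly on top of `N`, contradicting the maximality of `N`.
-/

section ModularLattice

variable {α : Type*}

/-- A property `z a b` of the quotients `b / a` of a lattice is *perspectivity invariant* if it
takes the same value on `a / (a ⊓ b)` and `(a ⊔ b) / b`: the lattice form of being compatible with
the second isomorphism theorem. -/
def PerspectivityInvariant [Lattice α] (z : α → α → Prop) : Prop :=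
  ∀ a b, z (a ⊓ b) a ↔ z b (a ⊔ b)

/-- All prime quotients `y / x` inside the interval `[a, b]` have the property `z`: the lattice
form of all composition factors of `b / a` being of a given type. -/
def AllCovers [Preorder α] (z : α → α → Prop) (a b : α) : Prop :=
  ∀ ⦃x y⦄, a ≤ x → x ⋖ y → y ≤ b → z x y

/-- Every chain `a ⋖ b ⋖ c` in which exactly one of `b / a` and `c / b` has the property `z`
splits, i.e. `b` has a complement in `[a, c]`: the lattice form of the vanishing of `Ext¹` between
simple modules of different types. -/
def SplitsMixedChains [Lattice α] (z : α → α → Prop) : Prop :=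
  ∀ ⦃a b c⦄, a ⋖ b → b ⋖ c → (z a b ↔ ¬ z b c) → ∃ b', b' ⊓ b = a ∧ b' ⊔ b = c

variable {z : α → α → Prop}

lemma SplitsMixedChains.not [Lattice α] (h : SplitsMixedChains z) :
    SplitsMixedChains fun a b ↦ ¬ z a b :=
  fun _ _ _ hab hbc hz ↦ h hab hbc (not_iff_not.1 hz)

lemma allCovers_of_covBy [PartialOrder α] {a b : α} (hab : a ⋖ b) (hz : z a b) :
    AllCovers z a b := by
  intro x y hax hxy hyb
  obtain rfl : x = a := (hab.eq_or_eq hax (hxy.le.trans hyb)).resolve_right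
    (hxy.lt.trans_le hyb).ne
  obtain rfl : y = b := (hab.eq_or_eq hxy.le hyb).resolve_left hxy.ne'
  exact hz

lemma AllCovers.mono [Preorder α] {a a' b b' : α} (h : AllCovers z a b) (ha : a ≤ a')
    (hb : b' ≤ b) : AllCovers z a' b' :=
  fun _ _ hax hxy hyb ↦ h (ha.trans hax) hxy (hyb.trans hb)

lemma allCovers_self [Preorder α] (z : α → α → Prop) (a : α) : AllCovers z a a :=
  fun _ _ hax hxy hya ↦ absurd hxy.lt (hya.trans hax).not_gt

lemma AllCovers.disjoint [Lattice α] [OrderBot α] [IsAtomic α] {a b : α}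
    (ha : AllCovers z ⊥ a) (hb : AllCovers (fun x y ↦ ¬ z x y) ⊥ b) : Disjoint a b := by
  rw [disjoint_iff]
  by_contra hne
  obtain ⟨x, hx, hxab⟩ := (eq_bot_or_exists_atom_le (a ⊓ b)).resolve_left hne
  exact hb le_rfl hx.bot_covBy (hxab.trans inf_le_right)
    (ha le_rfl hx.bot_covBy (hxab.trans inf_le_left))

namespace PerspectivityInvariant

variable [Lattice α] (hz : PerspectivityInvariant z)

include hz

protected lemma not : PerspectivityInvariant fun a b ↦ ¬ z a b :=
  fun a b ↦ not_congr (hz a b)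

variable [IsModularLattice α]

lemma inf_or_sup_of_covBy {x y : α} (hxy : x ⋖ y) (b : α) :
    (x ⊓ b ⋖ y ⊓ b ∧ (z (x ⊓ b) (y ⊓ b) ↔ z x y)) ∨
      (x ⊔ b ⋖ y ⊔ b ∧ (z x y ↔ z (x ⊔ b) (y ⊔ b))) := by
  by_cases hb : y ⊓ b ≤ x
  · right
    have hinf : y ⊓ (x ⊔ b) = x := by
      rw [inf_comm, sup_inf_assoc_of_le b hxy.le, inf_comm, sup_eq_left.2 hb]
    have hsup : y ⊔ (x ⊔ b) = y ⊔ b := by rw [← sup_assoc, sup_eq_left.2 hxy.le]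
    have hiff := hz y (x ⊔ b)
    rw [hinf, hsup] at hiff
    exact ⟨hsup ▸ covBy_sup_of_inf_covBy_left (hinf.symm ▸ hxy), hiff⟩
  · left
    have hinf : (y ⊓ b) ⊓ x = x ⊓ b := by
      rw [inf_right_comm, inf_eq_right.2 hxy.le]
    have hsup : (y ⊓ b) ⊔ x = y :=
      (hxy.eq_or_eq le_sup_right (sup_le inf_le_left hxy.le)).resolve_left
        fun h ↦ hb (sup_eq_right.1 h)
    have hiff := hz (y ⊓ b) x
    rw [hinf, hsup] at hiff
    exact ⟨hinf ▸ inf_covBy_of_covBy_sup_right (hsup.symm ▸ hxy), hiff⟩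

lemma allCovers_trans {a b c : α} (hab : a ≤ b) (hbc : b ≤ c) (h₁ : AllCovers z a b)
    (h₂ : AllCovers z b c) : AllCovers z a c := by
  intro x y hax hxy hyc
  obtain ⟨hcov, hiff⟩ | ⟨hcov, hiff⟩ := hz.inf_or_sup_of_covBy hxy b
  · exact hiff.1 (h₁ (le_inf hax hab) hcov inf_le_right)
  · exact hiff.2 (h₂ le_sup_right hcov (sup_le hyc hbc))

lemma allCovers_sup_of_inf {a b : α} (h : AllCovers z (a ⊓ b) a) : AllCovers z b (a ⊔ b) := by
  intro x y hbx hxy hy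
  obtain ⟨hcov, hiff⟩ | ⟨hcov, -⟩ := hz.inf_or_sup_of_covBy hxy a
  · exact hiff.1 (h (le_inf (inf_le_right.trans hbx) inf_le_left) hcov inf_le_right)
  · have hle : y ⊔ a ≤ x ⊔ a :=
      sup_le (hy.trans (sup_le le_sup_right (hbx.trans le_sup_left))) le_sup_right
    exact absurd hcov.lt hle.not_gt

lemma allCovers_sup {a b c : α} (hca : c ≤ a) (hcb : c ≤ b) (ha : AllCovers z c a)
    (hb : AllCovers z c b) : AllCovers z c (a ⊔ b) :=
  hz.allCovers_trans hcb le_sup_right hb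
    (hz.allCovers_sup_of_inf (ha.mono (le_inf hca hcb) le_rfl))

lemma allCovers_of_chain {n : ℕ} {f : Fin (n + 1) → α}
    (hcov : ∀ i : Fin n, f i.castSucc ⋖ f i.succ)
    (hf : ∀ i : Fin n, z (f i.castSucc) (f i.succ)) (i : Fin (n + 1)) :
    AllCovers z (f 0) (f i) := by
  have hmono : Monotone f := Fin.monotone_iff_le_succ.2 fun i ↦ (hcov i).le
  induction i using Fin.induction with
  | zero => exact allCovers_self z _
  | succ i ih =>
    exact hz.allCovers_trans (hmono (Fin.zero_le _)) (hcov i).le ih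
      (allCovers_of_covBy (hcov i) (hf i))

lemma exists_isGreatest_allCovers [OrderBot α] [WellFoundedGT α] :
    ∃ a, IsGreatest {x | AllCovers z ⊥ x} a := by
  obtain ⟨a, ha, hmax⟩ := wellFounded_gt.has_min {x | AllCovers z ⊥ x} ⟨⊥, allCovers_self z ⊥⟩
  refine ⟨a, ha, fun b hb ↦ ?_⟩
  by_contra hba
  exact hmax (a ⊔ b) (hz.allCovers_sup bot_le bot_le ha hb) (left_lt_sup.2 hba)

lemma exists_covBy_of_allCovers_not [WellFoundedLT α] [IsStronglyCoatomic α]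
    (hsplit : SplitsMixedChains z) {a w e : α} (haw : a ≤ w)
    (hw : AllCovers (fun x y ↦ ¬ z x y) a w) (hwe : w ⋖ e) (hze : z w e) :
    ∃ c, a ⋖ c ∧ z a c ∧ c ⊔ w = e := by
  induction w using WellFoundedLT.induction generalizing e with
  | ind w ih =>
    obtain rfl | hlt := haw.eq_or_lt
    · exact ⟨e, hwe, hze, sup_eq_left.2 hwe.le⟩
    obtain ⟨k, hak, hkw⟩ := exists_le_covBy_of_lt hlt
    obtain ⟨d, rfl, rfl⟩ := hsplit hkw hwe (iff_of_false (hw hak hkw le_rfl) (not_not.2 hze))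
    obtain ⟨c, hac, hzc, hcd⟩ := ih (d ⊓ w) hkw.lt hak (hw.mono le_rfl hkw.le)
      (inf_covBy_of_covBy_sup_right hwe) ((hz d w).2 hze)
    refine ⟨c, hac, hzc, ?_⟩
    calc c ⊔ w = c ⊔ d ⊓ w ⊔ w := by rw [sup_assoc, sup_eq_right.2 (inf_le_right : d ⊓ w ≤ w)]
      _ = d ⊔ w := by rw [hcd]

lemma not_of_covBy_of_isGreatest [OrderBot α] [WellFoundedLT α] [IsStronglyCoatomic α]
    (hsplit : SplitsMixedChains z) {a w e : α} (ha : IsGreatest {x | AllCovers z ⊥ x} a)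
    (haw : a ≤ w) (hw : AllCovers (fun x y ↦ ¬ z x y) a w) (hwe : w ⋖ e) : ¬ z w e := by
  intro hze
  obtain ⟨c, hac, hzc, rfl⟩ := hz.exists_covBy_of_allCovers_not hsplit haw hw hwe hze
  have hca : c ≤ a := ha.2 (hz.allCovers_trans bot_le hac.le ha.1 (allCovers_of_covBy hac hzc))
  exact hac.lt.not_ge hca

theorem exists_isCompl_isGreatest_allCovers [BoundedOrder α] [WellFoundedLT α] [WellFoundedGT α]
    (hsplit : SplitsMixedChains z) :
    ∃ a b, IsCompl a b ∧ IsGreatest {x | AllCovers z ⊥ x} a ∧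
      IsGreatest {x | AllCovers (fun x y ↦ ¬ z x y) ⊥ x} b := by
  obtain ⟨a, ha⟩ := hz.exists_isGreatest_allCovers
  obtain ⟨b, hb⟩ := hz.not.exists_isGreatest_allCovers
  refine ⟨a, b, ⟨ha.1.disjoint hb.1, codisjoint_iff.2 ?_⟩, ha, hb⟩
  by_contra hne
  obtain ⟨e, hcov, -⟩ := exists_covBy_le_of_lt (lt_top_iff_ne_top.2 hne)
  have hbsup : AllCovers z b (a ⊔ b) := hz.allCovers_sup_of_inf (ha.1.mono bot_le le_rfl)
  have hasup : AllCovers (fun x y ↦ ¬ z x y) a (a ⊔ b) := by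
    rw [sup_comm]
    exact hz.not.allCovers_sup_of_inf (hb.1.mono bot_le le_rfl)
  have hze : ¬ z (a ⊔ b) e := hz.not_of_covBy_of_isGreatest hsplit ha le_sup_left hasup hcov
  exact hz.not.not_of_covBy_of_isGreatest hsplit.not hb le_sup_right
    (by simpa only [not_not] using hbsup) hcov hze

end PerspectivityInvariant

end ModularLattice

section Ext

lemma subsingleton_abelianExt_of_subsingleton_ext {A C : Type*} [Ring A] [Category* C] [Abelian C]
    [Linear A C] [EnoughProjectives C] [HasExt C] {X Y : C} {n : ℕ}
    (h : Subsingleton (((Ext A C (n + 1)).obj (.op X)).obj Y)) :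
    Subsingleton (Abelian.Ext X Y (n + 1)) := by
  let P := ProjectiveResolution.of X
  have hexact : (P.complex.linearYonedaObj A Y).ExactAt (n + 1) := by
    rw [HomologicalComplex.exactAt_iff_isZero_homology]
    exact (ModuleCat.isZero_of_subsingleton _).of_iso (P.isoExt (n + 1) Y).symm
  rw [HomologicalComplex.exactAt_iff' _ n (n + 1) (n + 2) (by simp) (by simp),
    ShortComplex.moduleCat_exact_iff] at hexact
  refine subsingleton_of_forall_eq 0 fun x ↦ ?_
  obtain ⟨f, hf, rfl⟩ := P.extMk_surjective x (n + 2) rfl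
  exact (P.extMk_eq_zero_iff f (n + 2) rfl hf n rfl).2 (hexact f hf)

lemma exists_comp_eq_of_shortExact {C : Type*} [Category* C] [Abelian C] [HasExt C]
    {S : ShortComplex C} (hS : S.ShortExact) {Y : C} [Subsingleton (Abelian.Ext S.X₃ Y 1)]
    (φ : S.X₁ ⟶ Y) : ∃ ψ : S.X₂ ⟶ Y, S.f ≫ ψ = φ := by
  obtain ⟨x, hx⟩ := Abelian.Ext.contravariant_sequence_exact₁ hS Y (.mk₀ φ) (add_zero 1)
    (Subsingleton.elim _ _)
  obtain ⟨ψ, rfl⟩ := (Abelian.Ext.mk₀_bijective _ _).2 x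
  rw [Abelian.Ext.mk₀_comp_mk₀] at hx
  exact ⟨ψ, (Abelian.Ext.mk₀_bijective _ _).1 hx⟩

end Ext

section Subquotient

/-- The quotient `B / A` of two submodules `A ≤ B`; without this inclusion it is `B / (A ⊓ B)`. -/
abbrev Subquotient {R M : Type*} [Ring R] [AddCommGroup M] [Module R M] (A B : Submodule R M) :
    Type _ :=
  B ⧸ A.comap B.subtype

/-- The isomorphism `B / A ≃ f(B) / f(A)` induced by an injective linear map `f`; it serves to
regard the composition factors of a submodule as subquotients of the ambient module. -/
noncomputable def Subquotient.mapEquiv {R M M' : Type*} [Ring R] [AddCommGroup M] [Module R M]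
    [AddCommGroup M'] [Module R M'] (f : M →ₗ[R] M') (hf : Function.Injective f)
    (A B : Submodule R M) : Subquotient A B ≃ₗ[R] Subquotient (A.map f) (B.map f) :=
  Submodule.Quotient.equiv _ _ (Submodule.equivMapOfInjective f hf B) <| by
    ext ⟨_, y, hy, rfl⟩
    have hsymm : (Submodule.equivMapOfInjective f hf B).symm ⟨f y, y, hy, rfl⟩ = ⟨y, hy⟩ :=
      (LinearEquiv.symm_apply_eq _).2 rfl
    simp [hsymm, hf.eq_iff]

variable {R : Type u} [Ring R] {M : Type u} [AddCommGroup M] [Module R M]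

lemma exists_comp_inclusion_eq_of_ext1Group {L C : Submodule R M} (hLC : L ≤ C) {T : Type u}
    [AddCommGroup T] [Module R T] (h : Subsingleton (ext1Group R (Subquotient L C) T))
    (φ : L →ₗ[R] T) : ∃ ψ : C →ₗ[R] T, ψ ∘ₗ Submodule.inclusion hLC = φ := by
  let i := Submodule.inclusion hLC
  let p := (L.comap C.subtype).mkQ
  have hexact : Function.Exact i p := by
    rw [LinearMap.exact_iff, Submodule.ker_mkQ, Submodule.range_inclusion]
  have hS : (ModuleCat.shortComplexOfCompEqZero i p hexact.linearMap_comp_eq_zero).ShortExact :=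
    ModuleCat.shortComplex_shortExact _ hexact (Submodule.inclusion_injective hLC)
      (Submodule.mkQ_surjective _)
  have := subsingleton_abelianExt_of_subsingleton_ext h
  obtain ⟨ψ, hψ⟩ := exists_comp_eq_of_shortExact hS (ModuleCat.ofHom φ)
  exact ⟨ψ.hom, congrArg ModuleCat.Hom.hom hψ⟩

lemma exists_inf_eq_sup_eq_of_ext1Group {K L C : Submodule R M} (hKL : K ≤ L) (hLC : L ≤ C)
    (h : Subsingleton (ext1Group R (Subquotient L C) (Subquotient K L))) :
    ∃ L', L' ⊓ L = K ∧ L' ⊔ L = C := by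
  obtain ⟨ρ, hρ⟩ := exists_comp_inclusion_eq_of_ext1Group hLC h (K.comap L.subtype).mkQ
  have hker (x : L) : Submodule.inclusion hLC x ∈ LinearMap.ker ρ ↔ (x : M) ∈ K := by
    rw [LinearMap.mem_ker, ← LinearMap.comp_apply, hρ, ← LinearMap.mem_ker, Submodule.ker_mkQ]
    rfl
  refine ⟨(LinearMap.ker ρ).map C.subtype, le_antisymm ?_ (le_inf ?_ hKL), ?_⟩
  · rintro _ ⟨⟨y, hy, rfl⟩, hyL⟩
    exact (hker ⟨y, hyL⟩).1 hy
  · exact fun x hx ↦ ⟨_, (hker ⟨x, hKL hx⟩).2 hx, rfl⟩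
  · have hmap : (LinearMap.range (Submodule.inclusion hLC)).map ρ = ⊤ := by
      rw [← LinearMap.range_comp, hρ, Submodule.range_mkQ]
    have hrange : LinearMap.range ρ = ⊤ := top_le_iff.1 (hmap ▸ LinearMap.map_le_range)
    have hsup := (LinearMap.map_eq_top_iff hrange).1 hmap
    simpa only [Submodule.map_sup, Submodule.map_subtype_range_inclusion, Submodule.map_subtype_top,
      sup_comm] using congrArg (Submodule.map C.subtype) hsup

end Subquotient

section CompositionFactors

variable {R : Type u} [Ring R] {Z : ∀ (S : Type u) [AddCommGroup S] [Module R S], Prop}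
  {M : Type u} [AddCommGroup M] [Module R M]

/-- `Z` is a property of isomorphism classes of `R`-modules. -/
def IsoInvariant (Z : ∀ (S : Type u) [AddCommGroup S] [Module R S], Prop) : Prop :=
  ∀ (S : Type u) [AddCommGroup S] [Module R S] (T : Type u) [AddCommGroup T] [Module R T],
    (S ≃ₗ[R] T) → (Z S ↔ Z T)

/-- The property of a pair `A ≤ B` of submodules that `B / A` is of type `Z`, to which the lattice
notions above are applied. -/
def FactorOfType (Z : ∀ (S : Type u) [AddCommGroup S] [Module R S], Prop)
    (A B : Submodule R M) : Prop :=
  Z (Subquotient A B)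

lemma IsoInvariant.not (hZ : IsoInvariant Z) : IsoInvariant (R := R) fun S _ _ ↦ ¬ Z S :=
  fun S _ _ T _ _ e ↦ not_congr (hZ S T e)

lemma IsoInvariant.perspectivityInvariant (hZ : IsoInvariant Z) :
    PerspectivityInvariant (FactorOfType Z (M := M)) :=
  fun A B ↦ hZ _ _ (LinearMap.quotientInfEquivSupQuotient A B)

lemma IsoInvariant.factorOfType_map_subtype_iff (hZ : IsoInvariant Z) {N : Submodule R M}
    {A B : Submodule R N} :
    FactorOfType Z (A.map N.subtype) (B.map N.subtype) ↔ FactorOfType Z A B :=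
  (hZ _ _ (Subquotient.mapEquiv N.subtype N.injective_subtype A B)).symm

lemma AllCompositionFactorsIn.allCovers (hZ : IsoInvariant Z) {N : Submodule R M}
    (h : AllCompositionFactorsIn R Z N) : AllCovers (FactorOfType Z) ⊥ N := by
  obtain ⟨n, f, hmono, hbot, htop, hf⟩ := h
  have hcov (i : Fin n) : f i.castSucc ⋖ f i.succ :=
    (covBy_iff_quot_is_simple (hmono i.castSucc_lt_succ.le)).2 (hf i).1
  have hchain := hZ.perspectivityInvariant.allCovers_of_chain (f := fun i ↦ (f i).map N.subtype)
    (fun i ↦ Submodule.map_covBy_of_injective N.injective_subtype (hcov i))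
    (fun i ↦ hZ.factorOfType_map_subtype_iff.2 (hf i).2) (Fin.last n)
  simpa only [hbot, htop, Submodule.map_bot, Submodule.map_subtype_top] using hchain

lemma AllCovers.allCompositionFactorsIn (hZ : IsoInvariant Z) {N : Submodule R M}
    [IsNoetherian R N] [IsArtinian R N] (h : AllCovers (FactorOfType Z) ⊥ N) :
    AllCompositionFactorsIn R Z N := by
  obtain ⟨s, hbot, htop⟩ := exists_compositionSeries_of_isNoetherian_isArtinian R N
  refine ⟨s.length, s, s.strictMono.monotone, hbot, htop, fun i ↦ ?_⟩
  have hcov : s i.castSucc ⋖ s i.succ := s.step i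
  exact ⟨(covBy_iff_quot_is_simple hcov.le).1 hcov, hZ.factorOfType_map_subtype_iff.1
    (h bot_le (Submodule.map_covBy_of_injective N.injective_subtype hcov)
      (Submodule.map_subtype_le _ _))⟩

lemma splitsMixedChains_factorOfType
    (hext : ∀ (S : Type u) [AddCommGroup S] [Module R S]
      (S' : Type u) [AddCommGroup S'] [Module R S'],
      IsSimpleModule R S → IsSimpleModule R S' → Z S → ¬ Z S' →
      Subsingleton (ext1Group R S S') ∧ Subsingleton (ext1Group R S' S)) :
    SplitsMixedChains (FactorOfType Z (M := M)) := by
  intro K L C hKL hLC hiff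
  have hKLsimple := (covBy_iff_quot_is_simple hKL.le).1 hKL
  have hLCsimple := (covBy_iff_quot_is_simple hLC.le).1 hLC
  apply exists_inf_eq_sup_eq_of_ext1Group hKL.le hLC.le
  by_cases hZ : FactorOfType Z K L
  · exact (hext _ _ hKLsimple hLCsimple hZ (hiff.1 hZ)).2
  · exact (hext _ _ hLCsimple hKLsimple (not_not.1 fun h ↦ hZ (hiff.2 h)) hZ).1

end CompositionFactors

theorem stmt1 (R : Type u) [Ring R]
    (Z : ∀ (S : Type u) [AddCommGroup S] [Module R S], Prop)
    (hZiso : ∀ (S : Type u) [AddCommGroup S] [Module R S]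
      (T : Type u) [AddCommGroup T] [Module R T], (S ≃ₗ[R] T) → (Z S ↔ Z T))
    (hext : ∀ (S : Type u) [AddCommGroup S] [Module R S]
      (S' : Type u) [AddCommGroup S'] [Module R S'],
      IsSimpleModule R S → IsSimpleModule R S' → Z S → ¬ Z S' →
      Subsingleton (ext1Group R S S') ∧ Subsingleton (ext1Group R S' S))
    (M : Type u) [AddCommGroup M] [Module R M] (hM : IsFiniteLength R M) :
    ∃ MZ MZ' : Submodule R M, IsCompl MZ MZ' ∧
      AllCompositionFactorsIn R Z MZ ∧
      AllCompositionFactorsIn R (fun S _ _ => ¬ Z S) MZ' ∧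
      (∀ N : Submodule R M, AllCompositionFactorsIn R Z N → N ≤ MZ) ∧
      (∀ N : Submodule R M,
        AllCompositionFactorsIn R (fun S _ _ => ¬ Z S) N → N ≤ MZ') := by
  obtain ⟨_, _⟩ := isFiniteLength_iff_isNoetherian_isArtinian.1 hM
  have hZ : IsoInvariant Z := hZiso
  obtain ⟨A, B, hAB, hA, hB⟩ :=
    (hZ.perspectivityInvariant (M := M)).exists_isCompl_isGreatest_allCovers
      (splitsMixedChains_factorOfType hext)
  exact ⟨A, B, hAB, hA.1.allCompositionFactorsIn hZ, AllCovers.allCompositionFactorsIn hZ.not hB.1,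
    fun N hN ↦ hA.2 (hN.allCovers hZ), fun N hN ↦ hB.2 (hN.allCovers hZ.not)⟩
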